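/- arXiv:1711.08487 — 4 statements merged into one kernel-verified Lean document; each statement's English description precedes it below -/
import Mathlib

section
/- Let B₀ ⊆ B be a closed linear subspace. Then: (i) for every u ∈ H there exists a unique element S₀u ∈ B₀ such that b(S₀u, ψ) = −k(u, ψ) for all ψ ∈ B₀; the resulting map S₀ : H → B₀ is linear and satisfies ‖S₀u‖_B ≤ (C_k/C_V)‖u‖_H for all u ∈ H. (ii) The reduced bilinear form ã(u,v) := d(u,v) − c(S₀u, v) satisfies the Gårding inequality ã(v,v) + ‖v‖_L² ≥ α‖v‖_H² for all v ∈ H. (This is the key step, eq. (3.8) of the paper, in the proofs of Theorem 2.3 and Lemma 3.2: the reduced form inherits the Gårding inequality from the coupled form.) -/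
/-!
On the Hilbert space `B₀`, the form `b` is bounded and coercive, so Lax–Milgram represents it by an
isomorphism of `B₀`; composing its inverse with the Riesz representation of `-k(u, ·)` gives `S₀`,
which is therefore linear. Ellipticity of `b` yields uniqueness (test with the difference of two
solutions) and the norm bound (test with `S₀ u`). Testing the defining equation at `v` with
`ψ = S₀ v` gives `k(v, S₀ v) + b(S₀ v, S₀ v) = 0`, so the coupled Gårding inequality at `(v, S₀ v)`
is the reduced one with the nonnegative term `α ‖S₀ v‖²` to spare.
-/

/-- Lax–Milgram for a family of right-hand sides `f u` depending linearly and boundedly on `u`: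
the solution operator can be chosen linear. -/
theorem exists_linear_solution_operator {H V : Type*}
    [NormedAddCommGroup H] [InnerProductSpace ℝ H]
    [NormedAddCommGroup V] [InnerProductSpace ℝ V] [CompleteSpace V]
    (f : H →ₗ[ℝ] V →ₗ[ℝ] ℝ) (b : V →ₗ[ℝ] V →ₗ[ℝ] ℝ) (Cf Cb CV : ℝ) (hCV : 0 < CV)
    (hf : ∀ (u : H) (ψ : V), |f u ψ| ≤ Cf * ‖u‖ * ‖ψ‖)
    (hb : ∀ φ ψ : V, |b φ ψ| ≤ Cb * ‖φ‖ * ‖ψ‖)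
    (hbell : ∀ ψ : V, CV * ‖ψ‖ ^ 2 ≤ b ψ ψ) :
    ∃ S : H →ₗ[ℝ] V, ∀ u ψ, b (S u) ψ = f u ψ := by
  let b' : V →L[ℝ] V →L[ℝ] ℝ := LinearMap.mkContinuous₂ b Cb hb
  let f' : H →L[ℝ] V →L[ℝ] ℝ := LinearMap.mkContinuous₂ f Cf hf
  have hcoer : IsCoercive b' := ⟨CV, hCV, fun ψ => by
    have := hbell ψ
    simpa [b', pow_two, mul_assoc] using this⟩
  refine ⟨{ toFun := fun u => hcoer.continuousLinearEquivOfBilin.symm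
              ((InnerProductSpace.toDual ℝ V).symm (f' u))
            map_add' := fun x y => by simp
            map_smul' := fun r x => by simp }, fun u ψ => ?_⟩
  have h := hcoer.continuousLinearEquivOfBilin_apply
    (hcoer.continuousLinearEquivOfBilin.symm ((InnerProductSpace.toDual ℝ V).symm (f' u))) ψ
  rw [ContinuousLinearEquiv.apply_symm_apply, InnerProductSpace.toDual_symm_apply] at h
  exact h.symm

theorem reduced_form_garding
    {H B : Type*}
    [NormedAddCommGroup H] [InnerProductSpace ℝ H] [CompleteSpace H]
    [NormedAddCommGroup B] [InnerProductSpace ℝ B] [CompleteSpace B]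
    -- the further inner product ⟨·,·⟩_L on H with ‖v‖_L ≤ ‖v‖_H
    (innL : H →ₗ[ℝ] H →ₗ[ℝ] ℝ)
    (hsymm : ∀ x y : H, innL x y = innL y x)
    (hpos : ∀ x : H, 0 ≤ innL x x)
    (hdef : ∀ x : H, innL x x = 0 → x = 0)
    (hle : ∀ v : H, innL v v ≤ ‖v‖ ^ 2)
    -- the bilinear forms
    (d : H →ₗ[ℝ] H →ₗ[ℝ] ℝ) (c : B →ₗ[ℝ] H →ₗ[ℝ] ℝ)
    (k : H →ₗ[ℝ] B →ₗ[ℝ] ℝ) (b : B →ₗ[ℝ] B →ₗ[ℝ] ℝ)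
    -- the constants
    (Cd Ctr Ck Cb CV α : ℝ)
    (hCd : 0 < Cd) (hCtr : 0 < Ctr) (hCk : 0 < Ck)
    (hCb : 0 < Cb) (hCV : 0 < CV) (hα : 0 < α)
    -- boundedness
    (hd : ∀ u v : H, |d u v| ≤ Cd * ‖u‖ * ‖v‖)
    (hc : ∀ (ψ : B) (v : H), |c ψ v| ≤ Ctr * ‖ψ‖ * ‖v‖)
    (hk : ∀ (v : H) (ψ : B), |k v ψ| ≤ Ck * ‖v‖ * ‖ψ‖)
    (hb : ∀ φ ψ : B, |b φ ψ| ≤ Cb * ‖φ‖ * ‖ψ‖)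
    -- ellipticity of b
    (hbell : ∀ ψ : B, CV * ‖ψ‖ ^ 2 ≤ b ψ ψ)
    -- Gårding inequality for the coupled form
    (hgard : ∀ (v : H) (ψ : B),
      α * (‖v‖ ^ 2 + ‖ψ‖ ^ 2) ≤ d v v - c ψ v + k v ψ + b ψ ψ + innL v v)
    -- closed subspace B₀ ⊆ B
    (B₀ : Submodule ℝ B) (hB₀ : IsClosed (B₀ : Set B)) :
    ∃ S₀ : H →ₗ[ℝ] B,
      -- (i) S₀u ∈ B₀ solves b(S₀u, ψ) = −k(u, ψ) for all ψ ∈ B₀ ...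
      (∀ u : H, S₀ u ∈ B₀) ∧
      (∀ u : H, ∀ ψ ∈ B₀, b (S₀ u) ψ = -(k u ψ)) ∧
      -- ... and is the unique such element of B₀ ...
      (∀ u : H, ∀ χ ∈ B₀, (∀ ψ ∈ B₀, b χ ψ = -(k u ψ)) → χ = S₀ u) ∧
      -- ... with ‖S₀u‖_B ≤ (C_k/C_V)‖u‖_H
      (∀ u : H, ‖S₀ u‖ ≤ (Ck / CV) * ‖u‖) ∧
      -- (ii) the reduced form ã(u,v) = d(u,v) − c(S₀u,v) satisfies the
      -- Gårding inequality ã(v,v) + ‖v‖_L² ≥ α‖v‖_H²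
      (∀ v : H, α * ‖v‖ ^ 2 ≤ d v v - c (S₀ v) v + innL v v) := by
  have : CompleteSpace B₀ := hB₀.completeSpace_coe
  obtain ⟨S, hS⟩ := exists_linear_solution_operator (-(k.compl₂ B₀.subtype))
    (b.compl₁₂ B₀.subtype B₀.subtype) Ck Cb CV hCV
    (fun u ψ => by simpa using hk u ψ) (fun φ ψ => by simpa using hb φ ψ)
    (fun ψ => by simpa using hbell ψ)
  have hsol : ∀ u : H, ∀ ψ ∈ B₀, b (S u) ψ = -(k u ψ) := fun u ψ hψ => by
    simpa using hS u ⟨ψ, hψ⟩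
  refine ⟨B₀.subtype ∘ₗ S, fun u => (S u).2, hsol, fun u χ hχ h => ?_, fun u => ?_, fun v => ?_⟩
  · change χ = (S u : B)
    have hmem : χ - (S u : B) ∈ B₀ := B₀.sub_mem hχ (S u).2
    have h0 : b (χ - (S u : B)) (χ - (S u : B)) = 0 := by
      rw [map_sub b, LinearMap.sub_apply, h _ hmem, hsol u _ hmem, sub_self]
    have h1 := hbell (χ - (S u : B))
    rw [h0] at h1
    have h2 : ‖χ - (S u : B)‖ ^ 2 = 0 :=
      le_antisymm (nonpos_of_mul_nonpos_right h1 hCV) (sq_nonneg _)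
    exact sub_eq_zero.mp (norm_eq_zero.mp (pow_eq_zero_iff two_ne_zero |>.mp h2))
  · change ‖(S u : B)‖ ≤ Ck / CV * ‖u‖
    have h1 := hbell (S u : B)
    rw [hsol u _ (S u).2] at h1
    have h2 := (neg_le_abs _).trans (hk u (S u : B))
    rw [div_mul_eq_mul_div, le_div_iff₀ hCV]
    rcases (norm_nonneg (S u : B)).eq_or_lt with h0 | h0
    · rw [← h0, zero_mul]; positivity
    · refine le_of_mul_le_mul_right ?_ h0
      linarith
  · change α * ‖v‖ ^ 2 ≤ d v v - c (S v : B) v + innL v v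
    have h1 := hgard v (S v : B)
    rw [hsol v _ (S v).2] at h1
    have h2 : 0 ≤ α * ‖(S v : B)‖ ^ 2 := by positivity
    linarith
end

section
/- Let N ∈ ℕ, let τ¹, …, τᴺ ∈ (0, 1/4] be step sizes, and let ℓ¹, …, ℓᴺ be bounded linear functionals on (H, ‖·‖_H). Then there exists a unique finite sequence u⁰, u¹, …, uᴺ ∈ H with u⁰ = 0 and ⟨(uⁿ − uⁿ⁻¹)/τⁿ, v⟩_L + ã(uⁿ, v) = ℓⁿ(v) for all v ∈ H and all n = 1, …, N; moreover ‖uᴺ‖_L² + α · Σ_{n=1}^{N} τⁿ ‖uⁿ‖_H² ≤ (1/α) · exp(4 Σ_{n=1}^{N} τⁿ) · Σ_{n=1}^{N} τⁿ ‖ℓⁿ‖_{H'}². (This is the well-posedness and discrete energy estimate for the implicit Euler time discretization of the reduced problem, the core of Lemma 4.3, proven by testing with v = uⁿ and a discrete Gronwall argument.) -/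
/-!
Each implicit Euler step is a stationary problem for the bilinear form
`τ⁻¹ ⟨u, v⟩_L + ã(u, v)`. Since `τ⁻¹ ≥ 4`, the Gårding inequality makes this form coercive
with constant `α`, so Lax–Milgram solves the step (`exists_shifted_solution`), and coercivity gives
uniqueness (`shifted_solution_unique`).

Testing with `v = uⁿ`, polarization in the `L`-inner product and Young's inequality yield
`(1 - 2τⁿ) ‖uⁿ‖_L² + α τⁿ ‖uⁿ‖_H² ≤ ‖uⁿ⁻¹‖_L² + τⁿ ‖ℓⁿ‖² / α` (`euler_step_energy`). As
`(1 - 2τ)(1 + 4τ) ≥ 1` for `0 ≤ τ ≤ 1/4`, dividing by `1 - 2τⁿ` costs at most a factor `exp (4 τⁿ)`,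
and these factors accumulate to the exponential of the total time (`gronwall_step`).
-/

section

variable {H : Type*} [NormedAddCommGroup H] [InnerProductSpace ℝ H]

theorem abs_le_norm_mul_norm_of_posSemidef (innL : H →ₗ[ℝ] H →ₗ[ℝ] ℝ)
    (hsymm : ∀ x y : H, innL x y = innL y x) (hpos : ∀ x : H, 0 ≤ innL x x)
    (hle : ∀ v : H, innL v v ≤ ‖v‖ ^ 2) (x y : H) : |innL x y| ≤ ‖x‖ * ‖y‖ := by
  have h := LinearMap.BilinForm.apply_mul_apply_le_of_forall_zero_le innL hpos x y
  rw [hsymm y x] at h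
  apply abs_le_of_sq_le_sq _ (by positivity)
  calc innL x y ^ 2 = innL x y * innL x y := sq _
    _ ≤ innL x x * innL y y := h
    _ ≤ ‖x‖ ^ 2 * ‖y‖ ^ 2 := mul_le_mul (hle x) (hle y) (hpos y) (by positivity)
    _ = (‖x‖ * ‖y‖) ^ 2 := by ring

/-- Lax–Milgram for the form `c ⟨u, v⟩_L + ã(u, v)`, which is coercive by the Gårding inequality as
soon as `c ≥ 1`. The datum `ℓ(v) + c ⟨w, v⟩_L` is the right-hand side of an Euler step
started from `w`, with `c = τ⁻¹`. -/
theorem exists_shifted_solution [CompleteSpace H] (innL : H →ₗ[ℝ] H →ₗ[ℝ] ℝ)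
    (hsymm : ∀ x y : H, innL x y = innL y x) (hpos : ∀ x : H, 0 ≤ innL x x)
    (hle : ∀ v : H, innL v v ≤ ‖v‖ ^ 2)
    (A : H →ₗ[ℝ] H →ₗ[ℝ] ℝ) {Ca α : ℝ} (hα : 0 < α)
    (hA : ∀ u v : H, |A u v| ≤ Ca * ‖u‖ * ‖v‖)
    (hgard : ∀ v : H, α * ‖v‖ ^ 2 ≤ A v v + innL v v)
    {c : ℝ} (hc : 1 ≤ c) (ℓ : H →L[ℝ] ℝ) (w : H) :
    ∃ u : H, ∀ v : H, innL (c • (u - w)) v + A u v = ℓ v := by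
  have hL := abs_le_norm_mul_norm_of_posSemidef innL hsymm hpos hle
  let B : H →L[ℝ] H →L[ℝ] ℝ := LinearMap.mkContinuous₂ (c • innL + A) (c + Ca) (by
    intro x y
    simp only [LinearMap.add_apply, LinearMap.smul_apply, smul_eq_mul, Real.norm_eq_abs]
    have h1 := abs_add_le (c * innL x y) (A x y)
    rw [abs_mul, abs_of_nonneg (by linarith : 0 ≤ c)] at h1
    have h2 := mul_le_mul_of_nonneg_left (hL x y) (by linarith : 0 ≤ c)
    linarith [hA x y])
  have hB : ∀ x y, B x y = c * innL x y + A x y := fun x y => by simp [B]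
  have hcoer : IsCoercive B := by
    refine ⟨α, hα, fun v => ?_⟩
    rw [hB]
    nlinarith [hgard v, mul_nonneg (sub_nonneg.2 hc) (hpos v)]
  let f : H →L[ℝ] ℝ := ℓ + LinearMap.mkContinuous (c • innL w) (c * ‖w‖) (by
    intro y
    simp only [LinearMap.smul_apply, smul_eq_mul, Real.norm_eq_abs]
    rw [abs_mul, abs_of_nonneg (by linarith : 0 ≤ c), mul_assoc]
    exact mul_le_mul_of_nonneg_left (hL w y) (by linarith))
  have hf : ∀ v, f v = ℓ v + c * innL w v := fun v => by simp [f]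
  refine ⟨hcoer.continuousLinearEquivOfBilin.symm ((InnerProductSpace.toDual ℝ H).symm f),
    fun v => ?_⟩
  have h := hcoer.continuousLinearEquivOfBilin_apply
    (hcoer.continuousLinearEquivOfBilin.symm ((InnerProductSpace.toDual ℝ H).symm f)) v
  rw [ContinuousLinearEquiv.apply_symm_apply, InnerProductSpace.toDual_symm_apply, hf, hB] at h
  simp only [map_smul, map_sub, LinearMap.smul_apply, LinearMap.sub_apply, smul_eq_mul]
  linarith

theorem shifted_solution_unique (innL : H →ₗ[ℝ] H →ₗ[ℝ] ℝ) (hpos : ∀ x : H, 0 ≤ innL x x)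
    (A : H →ₗ[ℝ] H →ₗ[ℝ] ℝ) {α : ℝ} (hα : 0 < α)
    (hgard : ∀ v : H, α * ‖v‖ ^ 2 ≤ A v v + innL v v)
    {c : ℝ} (hc : 1 ≤ c) {ℓ : H →L[ℝ] ℝ} {w u u' : H}
    (hu : ∀ v : H, innL (c • (u - w)) v + A u v = ℓ v)
    (hu' : ∀ v : H, innL (c • (u' - w)) v + A u' v = ℓ v) : u' = u := by
  have h1 := hu (u' - u)
  have h2 := hu' (u' - u)
  have h3 := hgard (u' - u)
  have h4 := mul_nonneg (sub_nonneg.2 hc) (hpos (u' - u))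
  simp only [map_smul, map_sub, LinearMap.smul_apply, LinearMap.sub_apply, smul_eq_mul]
    at h1 h2 h3 h4
  have h5 : α * ‖u' - u‖ ^ 2 ≤ 0 := by linarith
  have h6 : ‖u' - u‖ ^ 2 ≤ 0 := by
    by_contra! h
    linarith [mul_pos hα h]
  exact sub_eq_zero.1 (norm_eq_zero.1 (pow_eq_zero_iff two_ne_zero |>.1
    (le_antisymm h6 (sq_nonneg _))))

/-- Energy inequality for one Euler step from `w` to `u`, obtained by testing with `v = u`. -/
theorem euler_step_energy (innL : H →ₗ[ℝ] H →ₗ[ℝ] ℝ)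
    (hsymm : ∀ x y : H, innL x y = innL y x) (hpos : ∀ x : H, 0 ≤ innL x x)
    (A : H →ₗ[ℝ] H →ₗ[ℝ] ℝ) {α : ℝ} (hα : 0 < α)
    (hgard : ∀ v : H, α * ‖v‖ ^ 2 ≤ A v v + innL v v)
    {τ : ℝ} (hτ : 0 < τ) {ℓ : H →L[ℝ] ℝ} {w u : H}
    (hu : ∀ v : H, innL (τ⁻¹ • (u - w)) v + A u v = ℓ v) :
    (1 - 2 * τ) * innL u u + α * (τ * ‖u‖ ^ 2) ≤ innL w w + (1 / α) * (τ * ‖ℓ‖ ^ 2) := by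
  have h1 := hu u
  have h2 := hpos (u - w)
  simp only [map_smul, map_sub, LinearMap.smul_apply, LinearMap.sub_apply, smul_eq_mul] at h1 h2
  rw [hsymm u w] at h2
  have h3 : innL u u - innL w u + τ * A u u = τ * ℓ u := by
    rw [← h1]
    field_simp
  have hyoung : 2 * ℓ u ≤ α * ‖u‖ ^ 2 + (1 / α) * ‖ℓ‖ ^ 2 := by
    have h4 : ℓ u ≤ ‖ℓ‖ * ‖u‖ := (le_abs_self _).trans (ℓ.le_opNorm u)
    have h5 : α * ‖u‖ ^ 2 + (1 / α) * ‖ℓ‖ ^ 2 - 2 * (‖ℓ‖ * ‖u‖)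
        = (1 / α) * (α * ‖u‖ - ‖ℓ‖) ^ 2 := by
      field_simp
      ring
    have h6 : 0 ≤ (1 / α) * (α * ‖u‖ - ‖ℓ‖) ^ 2 := by positivity
    linarith
  have h7 := mul_le_mul_of_nonneg_left hyoung hτ.le
  have h8 := mul_le_mul_of_nonneg_left (hgard u) hτ.le
  linarith

end

/-- One step of the discrete Gronwall argument: `e`, `e'` are the old and new values of `‖·‖_L²`,
`S` and `F` the accumulated dissipation and data, `d` and `g` their increments. -/
theorem gronwall_step {τ T e e' S d F g : ℝ} (hτ : 0 < τ) (hτ' : τ ≤ 1 / 4) (hT : 0 ≤ T)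
    (he : 0 ≤ e) (hS : 0 ≤ S) (hd : 0 ≤ d) (hg : 0 ≤ g)
    (hstep : (1 - 2 * τ) * e' + d ≤ e + g)
    (hind : e + S ≤ Real.exp (4 * T) * F) :
    e' + (S + d) ≤ Real.exp (4 * (T + τ)) * (F + g) := by
  have hE : 1 + 4 * τ ≤ Real.exp (4 * τ) := by linarith [Real.add_one_le_exp (4 * τ)]
  have hT1 : 1 ≤ Real.exp (4 * T) := Real.one_le_exp (by linarith)
  have hprod : 1 ≤ (1 - 2 * τ) * (1 + 4 * τ) := by nlinarith
  have h1 : e' + d ≤ (1 + 4 * τ) * (e + g) := by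
    have hpos : 0 < 1 - 2 * τ := by linarith
    have h2 : (1 - 2 * τ) * (e' + d) ≤ (1 - 2 * τ) * ((1 + 4 * τ) * (e + g)) := by
      have h3 := mul_le_mul_of_nonneg_right hprod (add_nonneg he hg)
      have h4 := mul_nonneg hτ.le hd
      linarith
    exact le_of_mul_le_mul_left h2 hpos
  calc e' + (S + d) ≤ (1 + 4 * τ) * (e + S + g) := by
        have := mul_nonneg hτ.le hS
        linarith
    _ ≤ Real.exp (4 * τ) * (e + S + g) := mul_le_mul_of_nonneg_right hE (by positivity)
    _ ≤ Real.exp (4 * τ) * (Real.exp (4 * T) * (F + g)) := by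
        apply mul_le_mul_of_nonneg_left _ (Real.exp_pos _).le
        have := mul_le_mul_of_nonneg_right hT1 hg
        linarith
    _ = Real.exp (4 * (T + τ)) * (F + g) := by
        rw [mul_add 4 T, Real.exp_add]
        ring

theorem implicit_euler_reduced_wellposed
    {H : Type*} [NormedAddCommGroup H] [InnerProductSpace ℝ H] [CompleteSpace H]
    -- the further inner product ⟨·,·⟩_L on H with ‖v‖_L ≤ ‖v‖_H
    (innL : H →ₗ[ℝ] H →ₗ[ℝ] ℝ)
    (hsymm : ∀ x y : H, innL x y = innL y x)
    (hpos : ∀ x : H, 0 ≤ innL x x)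
    (hdef : ∀ x : H, innL x x = 0 → x = 0)
    (hle : ∀ v : H, innL v v ≤ ‖v‖ ^ 2)
    -- the bilinear form ã : bounded and satisfying the Gårding inequality
    (A : H →ₗ[ℝ] H →ₗ[ℝ] ℝ) (Ca α : ℝ) (hCa : 0 < Ca) (hα : 0 < α)
    (hA : ∀ u v : H, |A u v| ≤ Ca * ‖u‖ * ‖v‖)
    (hgard : ∀ v : H, α * ‖v‖ ^ 2 ≤ A v v + innL v v)
    -- step sizes τⁿ ∈ (0, 1/4] and bounded linear functionals ℓⁿ
    (N : ℕ) (τ : ℕ → ℝ)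
    (hτ : ∀ n ∈ Finset.Icc 1 N, 0 < τ n ∧ τ n ≤ 1 / 4)
    (ℓ : ℕ → H →L[ℝ] ℝ) :
    ∃ u : ℕ → H,
      u 0 = 0 ∧
      -- the implicit Euler equations
      (∀ n ∈ Finset.Icc 1 N, ∀ v : H,
        innL ((τ n)⁻¹ • (u n - u (n - 1))) v + A (u n) v = ℓ n v) ∧
      -- uniqueness of the finite sequence u⁰, …, uᴺ
      (∀ u' : ℕ → H, u' 0 = 0 →
        (∀ n ∈ Finset.Icc 1 N, ∀ v : H,
          innL ((τ n)⁻¹ • (u' n - u' (n - 1))) v + A (u' n) v = ℓ n v) →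
        ∀ n ≤ N, u' n = u n) ∧
      -- the discrete energy estimate
      innL (u N) (u N) + α * ∑ n ∈ Finset.Icc 1 N, τ n * ‖u n‖ ^ 2
        ≤ (1 / α) * Real.exp (4 * ∑ n ∈ Finset.Icc 1 N, τ n) *
            ∑ n ∈ Finset.Icc 1 N, τ n * ‖ℓ n‖ ^ 2 := by
  have hinv : ∀ n ∈ Finset.Icc 1 N, 1 ≤ (τ n)⁻¹ := fun n hn =>
    (one_le_inv₀ (hτ n hn).1).2 (by linarith [(hτ n hn).2])
  have hex : ∀ n (w : H), ∃ u : H, n ∈ Finset.Icc 1 N →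
      ∀ v : H, innL ((τ n)⁻¹ • (u - w)) v + A u v = ℓ n v := by
    intro n w
    by_cases hn : n ∈ Finset.Icc 1 N
    · obtain ⟨u, hu⟩ := exists_shifted_solution innL hsymm hpos hle A hα hA hgard (hinv n hn) (ℓ n) w
      exact ⟨u, fun _ => hu⟩
    · exact ⟨0, fun h => absurd h hn⟩
  choose step hstep using hex
  let u : ℕ → H := fun n => Nat.rec 0 (fun k w => step (k + 1) w) n
  have heq : ∀ n ∈ Finset.Icc 1 N, ∀ v : H,
      innL ((τ n)⁻¹ • (u n - u (n - 1))) v + A (u n) v = ℓ n v := by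
    intro n hn
    obtain ⟨k, rfl⟩ := Nat.exists_eq_add_of_le' (Finset.mem_Icc.1 hn).1
    exact hstep (k + 1) (u k) hn
  refine ⟨u, rfl, heq, ?_, ?_⟩
  · intro u' h0 hu' n
    induction n with
    | zero => exact fun _ => h0
    | succ k ih =>
      intro hk
      have hmem : k + 1 ∈ Finset.Icc 1 N := Finset.mem_Icc.2 ⟨by omega, hk⟩
      have h1 := hu' (k + 1) hmem
      simp only [Nat.add_sub_cancel, ih (by omega)] at h1
      exact shifted_solution_unique innL hpos A hα hgard (hinv _ hmem) (heq (k + 1) hmem) h1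
  · -- The factor `1 / α` is moved next to the data sum, to match the form of `gronwall_step`.
    have key : ∀ n ≤ N, innL (u n) (u n) + α * ∑ k ∈ Finset.Icc 1 n, τ k * ‖u k‖ ^ 2
        ≤ Real.exp (4 * ∑ k ∈ Finset.Icc 1 n, τ k) *
          ((1 / α) * ∑ k ∈ Finset.Icc 1 n, τ k * ‖ℓ k‖ ^ 2) := by
      intro n
      induction n with
      | zero => intro _; simp [u]
      | succ k ih =>
        intro hk
        have hmem : k + 1 ∈ Finset.Icc 1 N := Finset.mem_Icc.2 ⟨by omega, hk⟩
        have hτ0 : ∀ j ∈ Finset.Icc 1 k, 0 ≤ τ j := fun j hj =>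
          (hτ j (Finset.mem_Icc.2 ⟨(Finset.mem_Icc.1 hj).1,
            (Finset.mem_Icc.1 hj).2.trans (by omega)⟩)).1.le
        have hpos' := (hτ _ hmem).1
        simp only [Finset.sum_Icc_succ_top (Nat.le_add_left 1 k), mul_add (1 / α), mul_add α]
        exact gronwall_step hpos' (hτ _ hmem).2 (Finset.sum_nonneg hτ0) (hpos (u k))
          (mul_nonneg hα.le (Finset.sum_nonneg fun j hj => mul_nonneg (hτ0 j hj) (sq_nonneg _)))
          (by positivity) (by positivity)
          (euler_step_energy innL hsymm hpos A hα hgard hpos' (heq (k + 1) hmem))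
          (ih (by omega))
    refine (key N le_rfl).trans_eq ?_
    ring
end

section
/- Let H_h ⊆ H and B_h ⊆ B be closed linear subspaces, let N ∈ ℕ, τ¹, …, τᴺ ∈ (0, 1/4], Fⁿ bounded linear functionals on (H, ‖·‖_H), and Gⁿ bounded linear functionals on (B, ‖·‖_B), and let u⁰ = 0, uⁿ ∈ H_h, φⁿ ∈ B_h (n = 1, …, N) satisfy ⟨(uⁿ − uⁿ⁻¹)/τⁿ, v⟩_L + d(uⁿ, v) − c(φⁿ, v) = Fⁿ(v) for all v ∈ H_h and k(uⁿ, ψ) + b(φⁿ, ψ) = Gⁿ(ψ) for all ψ ∈ B_h. Set dⁿ := (uⁿ − uⁿ⁻¹)/τⁿ. Then there is a constant C > 0 depending only on α, C_V, C_k, C_tr, C_d, C_P and on Σ_{n=1}^{N} τⁿ such that Σ_{n=1}^{N} τⁿ |dⁿ|_*² ≤ C · Σ_{n=1}^{N} τⁿ (‖Fⁿ‖_{H'}² + ‖Gⁿ‖_{B'}²). (This is the abstract form of Lemma 4.4: the fully discrete energy estimate including the dual-norm bound on the discrete time derivative.) -/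
/-!
The proof is the energy method. Testing the scheme with `(uⁿ, φⁿ)` and using the Gårding inequality
together with `2⟨u - w, u⟩_L ≥ ⟨u, u⟩_L - ⟨w, w⟩_L` gives
`⟨uⁿ, uⁿ⟩_L - ⟨uⁿ⁻¹, uⁿ⁻¹⟩_L + α τⁿ (‖uⁿ‖² + ‖φⁿ‖²) ≤ 2 τⁿ ⟨uⁿ, uⁿ⟩_L + τⁿ (‖Fⁿ‖² + ‖Gⁿ‖²) / α`.
The term `2 τⁿ ⟨uⁿ, uⁿ⟩_L` is implicit but `τⁿ ≤ 1/4`, so the discrete Grönwall inequality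
(`implicit_discrete_gronwall`) controls all `⟨uⁿ, uⁿ⟩_L`; summation then bounds `∑ τⁿ (‖uⁿ‖² + ‖φⁿ‖²)`
(`discrete_energy_sum`). Since `dⁿ ∈ H_h`, one has `⟨dⁿ, v⟩_L = ⟨dⁿ, P v⟩_L`, and `P v` is an
admissible test function: the first equation and the `H`-stability of `P` bound `|dⁿ|_*` by
`C_P (‖Fⁿ‖ + C_d ‖uⁿ‖ + C_tr ‖φⁿ‖)`.
-/

/-!
STATEMENT 11: Abstract form of Lemma 4.4: fully discrete energy estimate
including the dual-norm bound on the discrete time derivative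
dⁿ = (uⁿ − uⁿ⁻¹)/τⁿ, with a constant depending only on α, C_V, C_k, C_tr,
C_d, C_P and on Σ τⁿ.
-/

/-- The dual norm |w|_* := sup_{0 ≠ v ∈ H} ⟨w,v⟩_L/‖v‖_H. -/
noncomputable def starNorm {H : Type*}
    [NormedAddCommGroup H] [InnerProductSpace ℝ H]
    (innL : H →ₗ[ℝ] H →ₗ[ℝ] ℝ) (w : H) : ℝ :=
  ⨆ v : {v : H // v ≠ 0}, innL w (v : H) / ‖(v : H)‖

/-- Implicit discrete Grönwall inequality for steps at most `1/4`. -/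
theorem implicit_discrete_gronwall (E g τ : ℕ → ℝ) (N : ℕ)
    (hτ : ∀ n ∈ Finset.Icc 1 N, 0 < τ n ∧ τ n ≤ 1 / 4)
    (hg : ∀ n, 0 ≤ g n) (hE : ∀ n, 0 ≤ E n) (hE0 : E 0 = 0)
    (hstep : ∀ n ∈ Finset.Icc 1 N, E n ≤ E (n - 1) + 2 * τ n * E n + τ n * g n) :
    ∀ m ≤ N, E m ≤ Real.exp (4 * ∑ n ∈ Finset.Icc 1 m, τ n) *
      ∑ n ∈ Finset.Icc 1 m, τ n * g n := by
  intro m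
  induction m with
  | zero => intro _; simp [hE0]
  | succ m ih =>
    intro hm
    have ih' := ih (by omega)
    have hmem : m + 1 ∈ Finset.Icc 1 N := by simp; omega
    obtain ⟨h0, h4⟩ := hτ _ hmem
    have hs := hstep _ hmem
    simp only [Nat.add_sub_cancel] at hs
    rw [Finset.sum_Icc_succ_top (by omega), Finset.sum_Icc_succ_top (by omega)]
    have hT : 0 ≤ ∑ n ∈ Finset.Icc 1 m, τ n := Finset.sum_nonneg fun n hn =>
      (hτ n (by simp at hn ⊢; omega)).1.le
    set T := ∑ n ∈ Finset.Icc 1 m, τ n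
    set S := ∑ n ∈ Finset.Icc 1 m, τ n * g n
    set t := τ (m + 1)
    have hgt : 0 ≤ t * g (m + 1) := mul_nonneg h0.le (hg _)
    have h1 : 1 ≤ Real.exp (4 * T) := Real.one_le_exp (by positivity)
    have h2 : 1 + 4 * t ≤ Real.exp (4 * t) := by
      linarith [Real.add_one_le_exp (4 * t)]
    -- `1 ≤ (1 - 2t)(1 + 4t)` for `0 ≤ t ≤ 1/4`
    have h3 : E (m + 1) ≤ (1 + 4 * t) * (E m + t * g (m + 1)) := by
      have h5 : (1 + 4 * t) * ((1 - 2 * t) * E (m + 1)) ≤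
          (1 + 4 * t) * (E m + t * g (m + 1)) :=
        mul_le_mul_of_nonneg_left (by linarith) (by linarith)
      have h6 : 0 ≤ t * (1 - 4 * t) * E (m + 1) :=
        mul_nonneg (mul_nonneg h0.le (by linarith)) (hE _)
      linarith
    have h4 : E m + t * g (m + 1) ≤ Real.exp (4 * T) * (S + t * g (m + 1)) := by
      nlinarith
    calc E (m + 1) ≤ (1 + 4 * t) * (E m + t * g (m + 1)) := h3
      _ ≤ Real.exp (4 * t) * (Real.exp (4 * T) * (S + t * g (m + 1))) :=
          mul_le_mul h2 h4 (add_nonneg (hE _) hgt) (Real.exp_pos _).le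
      _ = Real.exp (4 * (T + t)) * (S + t * g (m + 1)) := by
          rw [mul_add 4 T t, Real.exp_add]; ring

/-- Summed energy estimate: `x` is the dissipated quantity, `E` the energy and `f` the data. -/
theorem discrete_energy_sum (E f x τ : ℕ → ℝ) (N : ℕ) (α T₀ : ℝ) (hα : 0 < α)
    (hτ : ∀ n ∈ Finset.Icc 1 N, 0 < τ n ∧ τ n ≤ 1 / 4)
    (hT : ∑ n ∈ Finset.Icc 1 N, τ n ≤ T₀)
    (hf : ∀ n, 0 ≤ f n) (hx : ∀ n, 0 ≤ x n) (hE : ∀ n, 0 ≤ E n) (hE0 : E 0 = 0)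
    (hstep : ∀ n ∈ Finset.Icc 1 N,
      E n - E (n - 1) + α * (τ n * x n) ≤ 2 * τ n * E n + τ n * (f n / α)) :
    ∑ n ∈ Finset.Icc 1 N, τ n * x n ≤
      (2 * T₀ * Real.exp (4 * T₀) + 1) / α ^ 2 * ∑ n ∈ Finset.Icc 1 N, τ n * f n := by
  have hgr := implicit_discrete_gronwall E (fun n => f n / α) τ N hτ
    (fun n => div_nonneg (hf n) hα.le) hE hE0 (by
      intro n hn
      have h1 := hstep n hn
      have h2 := mul_nonneg hα.le (mul_nonneg (hτ n hn).1.le (hx n))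
      linarith)
  have hsum : ∀ m, ∑ n ∈ Finset.Icc 1 m, τ n * (f n / α) =
      (∑ n ∈ Finset.Icc 1 m, τ n * f n) / α := by
    intro m
    rw [Finset.sum_div]
    exact Finset.sum_congr rfl fun n _ => by ring
  have hnn : ∀ n ∈ Finset.Icc 1 N, 0 ≤ τ n * f n := fun n hn =>
    mul_nonneg (hτ n hn).1.le (hf n)
  set S := ∑ n ∈ Finset.Icc 1 N, τ n * f n with hS
  have hS0 : 0 ≤ S := Finset.sum_nonneg hnn
  set M := Real.exp (4 * T₀) * (S / α) with hM
  have hM0 : 0 ≤ M := by positivity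
  have hEM : ∀ m ≤ N, E m ≤ M := by
    intro m hm
    have hsub : Finset.Icc 1 m ⊆ Finset.Icc 1 N := Finset.Icc_subset_Icc_right hm
    refine (hgr m hm).trans ?_
    simp only [hsum]
    have h1 : ∑ n ∈ Finset.Icc 1 m, τ n ≤ T₀ :=
      (Finset.sum_le_sum_of_subset_of_nonneg hsub fun n hn _ => (hτ n hn).1.le).trans hT
    have h2 : ∑ n ∈ Finset.Icc 1 m, τ n * f n ≤ S :=
      Finset.sum_le_sum_of_subset_of_nonneg hsub fun n hn _ => hnn n hn
    have h3 : 0 ≤ ∑ n ∈ Finset.Icc 1 m, τ n * f n :=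
      Finset.sum_nonneg fun n hn => hnn n (hsub hn)
    rw [hM]
    gcongr
  have htel : ∀ m, ∑ n ∈ Finset.Icc 1 m, (E n - E (n - 1)) = E m := by
    intro m
    induction m with
    | zero => simp [hE0]
    | succ m ih => rw [Finset.sum_Icc_succ_top (by omega), ih]; simp
  have h1 : ∑ n ∈ Finset.Icc 1 N, (E n - E (n - 1) + α * (τ n * x n)) ≤
      ∑ n ∈ Finset.Icc 1 N, (τ n * (2 * M) + τ n * (f n / α)) := by
    refine Finset.sum_le_sum fun n hn => (hstep n hn).trans ?_
    have := mul_le_mul_of_nonneg_left (hEM n (Finset.mem_Icc.1 hn).2) (hτ n hn).1.le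
    linarith
  rw [Finset.sum_add_distrib, Finset.sum_add_distrib, htel, ← Finset.mul_sum,
    ← Finset.sum_mul, hsum] at h1
  have h2 : (∑ n ∈ Finset.Icc 1 N, τ n) * (2 * M) ≤ T₀ * (2 * M) :=
    mul_le_mul_of_nonneg_right hT (by positivity)
  have h3 : α * ∑ n ∈ Finset.Icc 1 N, τ n * x n ≤ T₀ * (2 * M) + S / α := by
    linarith [hE N]
  have h4 : ∑ n ∈ Finset.Icc 1 N, τ n * x n ≤ (T₀ * (2 * M) + S / α) / α := by
    rw [le_div_iff₀ hα]; linarith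
  refine h4.trans (le_of_eq ?_)
  rw [hM]
  field_simp

theorem abs_starNorm_le {H : Type*} [NormedAddCommGroup H] [InnerProductSpace ℝ H]
    (innL : H →ₗ[ℝ] H →ₗ[ℝ] ℝ) (w : H) (M : ℝ) (hM : 0 ≤ M)
    (h : ∀ v, |innL w v| ≤ M * ‖v‖) : |starNorm innL w| ≤ M := by
  have hq : ∀ v : {v : H // v ≠ 0}, |innL w (v : H) / ‖(v : H)‖| ≤ M := by
    intro v
    rw [abs_div, abs_norm, div_le_iff₀ (norm_pos_iff.2 v.2)]
    exact h v
  unfold starNorm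
  -- over the empty index set (trivial `H`) the real supremum is `0`
  rcases isEmpty_or_nonempty {v : H // v ≠ 0} with he | ⟨⟨v⟩⟩
  · rw [Real.iSup_of_isEmpty]; simpa using hM
  · have : Nonempty {v : H // v ≠ 0} := ⟨v⟩
    refine abs_le.2 ⟨(abs_le.1 (hq v)).1.trans ?_, ciSup_le fun v => (abs_le.1 (hq v)).2⟩
    exact le_ciSup (f := fun v : {v : H // v ≠ 0} => innL w (v : H) / ‖(v : H)‖)
      ⟨M, by rintro _ ⟨v, rfl⟩; exact (abs_le.1 (hq v)).2⟩ v

theorem fully_discrete_dual_norm_energy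
    {H B : Type*}
    [NormedAddCommGroup H] [InnerProductSpace ℝ H] [CompleteSpace H]
    [NormedAddCommGroup B] [InnerProductSpace ℝ B] [CompleteSpace B]
    -- the further inner product ⟨·,·⟩_L on H with ‖v‖_L ≤ ‖v‖_H
    (innL : H →ₗ[ℝ] H →ₗ[ℝ] ℝ)
    (hsymm : ∀ x y : H, innL x y = innL y x)
    (hpos : ∀ x : H, 0 ≤ innL x x)
    (hdef : ∀ x : H, innL x x = 0 → x = 0)
    (hle : ∀ v : H, innL v v ≤ ‖v‖ ^ 2)
    -- the bilinear forms
    (d : H →ₗ[ℝ] H →ₗ[ℝ] ℝ) (c : B →ₗ[ℝ] H →ₗ[ℝ] ℝ)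
    (k : H →ₗ[ℝ] B →ₗ[ℝ] ℝ) (b : B →ₗ[ℝ] B →ₗ[ℝ] ℝ)
    -- the constants
    (Cd Ctr Ck Cb CV α CP : ℝ)
    (hCd : 0 < Cd) (hCtr : 0 < Ctr) (hCk : 0 < Ck)
    (hCb : 0 < Cb) (hCV : 0 < CV) (hα : 0 < α) (hCP : 0 < CP)
    -- boundedness
    (hd : ∀ u v : H, |d u v| ≤ Cd * ‖u‖ * ‖v‖)
    (hc : ∀ (ψ : B) (v : H), |c ψ v| ≤ Ctr * ‖ψ‖ * ‖v‖)
    (hk : ∀ (v : H) (ψ : B), |k v ψ| ≤ Ck * ‖v‖ * ‖ψ‖)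
    (hb : ∀ φ ψ : B, |b φ ψ| ≤ Cb * ‖φ‖ * ‖ψ‖)
    -- ellipticity of b
    (hbell : ∀ ψ : B, CV * ‖ψ‖ ^ 2 ≤ b ψ ψ)
    -- Gårding inequality for the coupled form
    (hgard : ∀ (v : H) (ψ : B),
      α * (‖v‖ ^ 2 + ‖ψ‖ ^ 2) ≤ d v v - c ψ v + k v ψ + b ψ ψ + innL v v) :
    -- for every bound T₀ on Σ τⁿ there is a constant C depending only on
    -- α, C_V, C_k, C_tr, C_d, C_P and T₀
    ∀ T₀ > (0 : ℝ), ∃ C > 0,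
      ∀ (Hh : Submodule ℝ H) (Bh : Submodule ℝ B)
        -- an H-stable L-orthogonal projection P onto Hh
        (P : H →ₗ[ℝ] H),
        (∀ v : H, P v ∈ Hh) →
        (∀ v : H, ∀ s ∈ Hh, innL (v - P v) s = 0) →
        (∀ v : H, ‖P v‖ ≤ CP * ‖v‖) →
      ∀ (N : ℕ) (τ : ℕ → ℝ),
        (∀ n ∈ Finset.Icc 1 N, 0 < τ n ∧ τ n ≤ 1 / 4) →
        (∑ n ∈ Finset.Icc 1 N, τ n) ≤ T₀ →
      ∀ (F : ℕ → H →L[ℝ] ℝ) (G : ℕ → B →L[ℝ] ℝ)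
        (u : ℕ → H) (φ : ℕ → B),
        u 0 = 0 →
        (∀ n ∈ Finset.Icc 1 N, u n ∈ Hh ∧ φ n ∈ Bh) →
        (∀ n ∈ Finset.Icc 1 N,
          (∀ v ∈ Hh,
            innL ((τ n)⁻¹ • (u n - u (n - 1))) v + d (u n) v - c (φ n) v
              = F n v) ∧
          (∀ ψ ∈ Bh, k (u n) ψ + b (φ n) ψ = G n ψ)) →
        ∑ n ∈ Finset.Icc 1 N,
            τ n * (starNorm innL ((τ n)⁻¹ • (u n - u (n - 1)))) ^ 2
          ≤ C * ∑ n ∈ Finset.Icc 1 N, τ n * (‖F n‖ ^ 2 + ‖G n‖ ^ 2) := by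
  intro T₀ hT₀
  set K := (2 * T₀ * Real.exp (4 * T₀) + 1) / α ^ 2 with hK
  have hK0 : 0 < K := by positivity
  refine ⟨3 * CP ^ 2 * (1 + (Cd ^ 2 + Ctr ^ 2) * K), by positivity, ?_⟩
  intro Hh Bh P hPm hPo hPs N τ hτ hT F G u φ hu0 hmem heq
  have hen := discrete_energy_sum (fun n => innL (u n) (u n))
    (fun n => ‖F n‖ ^ 2 + ‖G n‖ ^ 2) (fun n => ‖u n‖ ^ 2 + ‖φ n‖ ^ 2) τ N α T₀ hα hτ hT
    (fun n => by positivity) (fun n => by positivity) (fun n => hpos _) (by simp [hu0]) (by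
      intro n hn
      obtain ⟨ht, -⟩ := hτ n hn
      have e1 := (heq n hn).1 (u n) (hmem n hn).1
      have e2 := (heq n hn).2 (φ n) (hmem n hn).2
      have hg := hgard (u n) (φ n)
      have hF : F n (u n) ≤ ‖F n‖ * ‖u n‖ := (le_abs_self _).trans ((F n).le_opNorm _)
      have hG : G n (φ n) ≤ ‖G n‖ * ‖φ n‖ := (le_abs_self _).trans ((G n).le_opNorm _)
      -- Young's inequality, weighted so that half of the coercivity absorbs the solution
      have young : ∀ a y : ℝ, a * y ≤ α / 2 * y ^ 2 + a ^ 2 / α / 2 := by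
        intro a y
        have h : α / 2 * y ^ 2 + a ^ 2 / α / 2 - a * y = (α * y - a) ^ 2 / (2 * α) := by
          field_simp; ring
        have : 0 ≤ (α * y - a) ^ 2 / (2 * α) := by positivity
        linarith
      have y1 := young ‖F n‖ ‖u n‖
      have y2 := young ‖G n‖ ‖φ n‖
      have hD := hpos (u n - u (n - 1))
      have hs := hsymm (u n) (u (n - 1))
      simp only [map_sub, map_smul, LinearMap.sub_apply, LinearMap.smul_apply,
        smul_eq_mul] at e1 hD
      set X := (τ n)⁻¹ * (innL (u n) (u n) - innL (u (n - 1)) (u n)) with hX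
      have hX' : τ n * X = innL (u n) (u n) - innL (u (n - 1)) (u n) := by
        rw [hX]; field_simp
      have hkey : 2 * X + α * (‖u n‖ ^ 2 + ‖φ n‖ ^ 2) ≤
          2 * innL (u n) (u n) + (‖F n‖ ^ 2 + ‖G n‖ ^ 2) / α := by
        rw [add_div]; linarith
      have := mul_le_mul_of_nonneg_left hkey ht.le
      linarith)
  have hdual : ∀ n ∈ Finset.Icc 1 N,
      |starNorm innL ((τ n)⁻¹ • (u n - u (n - 1)))| ≤
        CP * (‖F n‖ + Cd * ‖u n‖ + Ctr * ‖φ n‖) := by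
    intro n hn
    have hprev : u (n - 1) ∈ Hh := by
      rcases Nat.eq_zero_or_pos (n - 1) with h | h
      · rw [h, hu0]; exact Hh.zero_mem
      · exact (hmem (n - 1) (by simp at hn ⊢; omega)).1
    have hw : (τ n)⁻¹ • (u n - u (n - 1)) ∈ Hh :=
      Hh.smul_mem _ (Hh.sub_mem (hmem n hn).1 hprev)
    have he := (heq n hn).1
    set w := (τ n)⁻¹ • (u n - u (n - 1))
    refine abs_starNorm_le innL w _ (by positivity) fun v => ?_
    have h1 : innL w v = innL w (P v) := by
      have := hPo v w hw
      rw [hsymm, map_sub] at this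
      linarith
    have h2 : innL w v = F n (P v) - d (u n) (P v) + c (φ n) (P v) := by
      rw [h1]; linarith [he (P v) (hPm v)]
    have hF : |F n (P v)| ≤ ‖F n‖ * ‖P v‖ := (F n).le_opNorm _
    have hd' := hd (u n) (P v)
    have hc' := hc (φ n) (P v)
    have h3 : |innL w v| ≤ (‖F n‖ + Cd * ‖u n‖ + Ctr * ‖φ n‖) * ‖P v‖ := by
      rw [h2]
      rw [abs_le] at *
      constructor <;> linarith [hF.1, hF.2, hd'.1, hd'.2, hc'.1, hc'.2]
    calc |innL w v| ≤ (‖F n‖ + Cd * ‖u n‖ + Ctr * ‖φ n‖) * ‖P v‖ := h3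
      _ ≤ (‖F n‖ + Cd * ‖u n‖ + Ctr * ‖φ n‖) * (CP * ‖v‖) :=
          mul_le_mul_of_nonneg_left (hPs v) (by positivity)
      _ = CP * (‖F n‖ + Cd * ‖u n‖ + Ctr * ‖φ n‖) * ‖v‖ := by ring
  have hterm : ∀ n ∈ Finset.Icc 1 N,
      τ n * (starNorm innL ((τ n)⁻¹ • (u n - u (n - 1)))) ^ 2 ≤
        3 * CP ^ 2 * (τ n * (‖F n‖ ^ 2 + ‖G n‖ ^ 2)) +
        3 * CP ^ 2 * (Cd ^ 2 + Ctr ^ 2) * (τ n * (‖u n‖ ^ 2 + ‖φ n‖ ^ 2)) := by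
    intro n hn
    have h1 : (starNorm innL ((τ n)⁻¹ • (u n - u (n - 1)))) ^ 2 ≤
        (CP * (‖F n‖ + Cd * ‖u n‖ + Ctr * ‖φ n‖)) ^ 2 :=
      sq_le_sq' (abs_le.1 (hdual n hn)).1 (abs_le.1 (hdual n hn)).2
    have h2 : (‖F n‖ + Cd * ‖u n‖ + Ctr * ‖φ n‖) ^ 2 ≤
        3 * (‖F n‖ ^ 2 + ‖G n‖ ^ 2 + (Cd ^ 2 + Ctr ^ 2) * (‖u n‖ ^ 2 + ‖φ n‖ ^ 2)) := by
      linarith [sq_nonneg (‖F n‖ - Cd * ‖u n‖), sq_nonneg (‖F n‖ - Ctr * ‖φ n‖),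
        sq_nonneg (Cd * ‖u n‖ - Ctr * ‖φ n‖), sq_nonneg (Cd * ‖φ n‖),
        sq_nonneg (Ctr * ‖u n‖), sq_nonneg ‖G n‖]
    have h3 := mul_le_mul_of_nonneg_left h2 (sq_nonneg CP)
    have h4 := mul_le_mul_of_nonneg_left (h1.trans ((mul_pow _ _ 2).le.trans h3))
      (hτ n hn).1.le
    linarith
  refine (Finset.sum_le_sum hterm).trans ?_
  rw [Finset.sum_add_distrib, ← Finset.mul_sum, ← Finset.mul_sum]
  have h5 := mul_le_mul_of_nonneg_left hen
    (show 0 ≤ 3 * CP ^ 2 * (Cd ^ 2 + Ctr ^ 2) by positivity)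
  simp only [← hK] at h5
  linarith
end

section
/- Let H_h ⊆ H and B_h ⊆ B be closed linear subspaces, T > 0, and F: [0, T] → H', G: [0, T] → B' continuous. Suppose u: [0, T] → H is continuously differentiable with u(0) = 0 and φ: [0, T] → B is continuous with ⟨u'(t), v⟩_L + d(u(t), v) − c(φ(t), v) = F(t)(v) for all v ∈ H and k(u(t), ψ) + b(φ(t), ψ) = G(t)(ψ) for all ψ ∈ B, for every t ∈ [0, T]; and suppose u_h: [0, T] → H_h is continuously differentiable with u_h(0) = 0 and φ_h: [0, T] → B_h is continuous and satisfies the same two equations tested only with v ∈ H_h and ψ ∈ B_h. Then there is a constant C > 0 depending only on α, C_V, C_k, C_tr, C_d, C_b, C_P, and T such that for every continuously differentiable ũ: [0, T] → H_h with ũ(0) = 0 and every continuous φ̃: [0, T] → B_h: ∫₀ᵀ (‖u(t) − u_h(t)‖_H² + |u'(t) − u_h'(t)|_*² + ‖φ(t) − φ_h(t)‖_B²) dt ≤ C ∫₀ᵀ (‖u(t) − ũ(t)‖_H² + |u'(t) − ũ'(t)|_*² + ‖φ(t) − φ̃(t)‖_B²) dt. (This is the abstract form of Theorem 3.4: quasi-best-approximation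 of the Galerkin semi-discretization of the non-symmetric coupling in the energy norm.) -/
section StarNorm

variable {H : Type*} [NormedAddCommGroup H] [InnerProductSpace ℝ H]
  {innL : H →ₗ[ℝ] H →ₗ[ℝ] ℝ}

lemma abs_innL_le (hsymm : ∀ x y : H, innL x y = innL y x) (hpos : ∀ x : H, 0 ≤ innL x x)
    (hle : ∀ v : H, innL v v ≤ ‖v‖ ^ 2) (x y : H) : |innL x y| ≤ ‖x‖ * ‖y‖ := by
  have h := LinearMap.BilinForm.apply_sq_le_of_symm innL hpos ⟨fun a b => hsymm a b⟩ x y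
  apply abs_le_of_sq_le_sq _ (by positivity)
  calc innL x y ^ 2 ≤ innL x x * innL y y := h
    _ ≤ ‖x‖ ^ 2 * ‖y‖ ^ 2 := mul_le_mul (hle x) (hle y) (hpos y) (by positivity)
    _ = (‖x‖ * ‖y‖) ^ 2 := by ring

lemma starNorm_nonneg (w : H) : 0 ≤ starNorm innL w := by
  rcases isEmpty_or_nonempty {v : H // v ≠ 0} with hE | ⟨⟨v, hv⟩⟩
  · simp [starNorm]
  · apply Real.iSup_nonneg'
    rcases le_total 0 (innL w v) with h | h
    · exact ⟨⟨v, hv⟩, div_nonneg h (norm_nonneg _)⟩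
    · refine ⟨⟨-v, neg_ne_zero.2 hv⟩, div_nonneg ?_ (norm_nonneg _)⟩
      simpa using h

lemma starNorm_le {w : H} {K : ℝ} (hK : 0 ≤ K) (h : ∀ v : H, innL w v ≤ K * ‖v‖) :
    starNorm innL w ≤ K := by
  apply Real.iSup_le _ hK
  rintro ⟨v, hv⟩
  exact (div_le_iff₀ (norm_pos_iff.2 hv)).2 (h v)

/-- The supremum defining `starNorm` is over a bounded set as soon as `innL` is bounded, so it is
a genuine supremum and not the junk value `0`. -/
lemma innL_le_starNorm (hB : ∀ x y : H, |innL x y| ≤ ‖x‖ * ‖y‖) (w v : H) :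
    innL w v ≤ starNorm innL w * ‖v‖ := by
  by_cases hv : v = 0
  · simp [hv]
  rw [← div_le_iff₀ (norm_pos_iff.2 hv)]
  have hbdd : BddAbove (Set.range fun v : {v : H // v ≠ 0} => innL w (v : H) / ‖(v : H)‖) := by
    refine ⟨‖w‖, ?_⟩
    rintro _ ⟨⟨v, hv⟩, rfl⟩
    exact (div_le_iff₀ (norm_pos_iff.2 hv)).2 ((le_abs_self _).trans (hB w v))
  exact le_ciSup hbdd ⟨v, hv⟩

lemma starNorm_sub_le (hB : ∀ x y : H, |innL x y| ≤ ‖x‖ * ‖y‖) (x y : H) :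
    starNorm innL (x - y) ≤ starNorm innL x + starNorm innL y := by
  apply starNorm_le (add_nonneg (starNorm_nonneg x) (starNorm_nonneg y))
  intro v
  have h1 := innL_le_starNorm hB x v
  have h2 := innL_le_starNorm hB y (-v)
  rw [map_neg, norm_neg] at h2
  simp only [map_sub, LinearMap.sub_apply]
  linarith

lemma continuous_starNorm (hB : ∀ x y : H, |innL x y| ≤ ‖x‖ * ‖y‖) :
    Continuous (starNorm innL) := by
  refine (LipschitzWith.of_le_add (f := starNorm innL) fun x y => ?_).continuous
  have hyx : starNorm innL (y - x) ≤ dist x y := by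
    rw [dist_comm, dist_eq_norm]
    exact starNorm_le (norm_nonneg _) fun v => (le_abs_self _).trans (hB _ v)
  have h := starNorm_le (w := x) (innL := innL) (K := starNorm innL y + dist x y)
    (add_nonneg (starNorm_nonneg y) dist_nonneg) fun v => by
      have h1 := innL_le_starNorm hB y v
      have h2 := (le_abs_self _).trans (hB (x - y) v)
      rw [← dist_eq_norm] at h2
      simp only [map_sub, LinearMap.sub_apply] at h2
      linarith
  exact h

/-- The range of a bounded `innL`-orthogonal projection is fixed by it and closed, so the derivative
of a curve in the range stays there; at the endpoints of `[0, T]` the one-sided difference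
quotients suffice. -/
lemma deriv_mem_of_projection (hdef : ∀ x : H, innL x x = 0 → x = 0) {Hh : Submodule ℝ H}
    {P : H →ₗ[ℝ] H} {CP : ℝ} (hPm : ∀ v, P v ∈ Hh)
    (hPo : ∀ v : H, ∀ s ∈ Hh, innL (v - P v) s = 0) (hPb : ∀ v, ‖P v‖ ≤ CP * ‖v‖)
    {T : ℝ} (hT : 0 < T) {z z' : ℝ → H} (hz : ∀ t ∈ Set.Icc (0 : ℝ) T, z t ∈ Hh)
    (hz' : ∀ t ∈ Set.Icc (0 : ℝ) T, HasDerivAt z (z' t) t) :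
    ∀ t ∈ Set.Icc (0 : ℝ) T, z' t ∈ Hh := by
  intro t ht
  have hfix : ∀ v ∈ Hh, v - P v = 0 := fun v hv =>
    hdef _ (hPo v _ (Hh.sub_mem hv (hPm v)))
  let Q : H →L[ℝ] H := P.mkContinuous CP hPb
  have h1 : HasDerivAt (fun s => z s - Q (z s)) (z' t - Q (z' t)) t :=
    (hz' t ht).sub (Q.hasFDerivAt.comp_hasDerivAt t (hz' t ht))
  have h2 : HasDerivWithinAt (fun s => z s - Q (z s)) 0 (Set.Icc 0 T) t :=
    (hasDerivWithinAt_const t (Set.Icc 0 T) (0 : H)).congr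
      (fun s hs => hfix _ (hz s hs)) (hfix _ (hz t ht))
  have h3 : z' t - P (z' t) = 0 :=
    UniqueDiffWithinAt.eq_deriv _ (uniqueDiffOn_Icc hT t ht) h1.hasDerivWithinAt h2
  rw [sub_eq_zero.1 h3]
  exact hPm _

lemma hasDerivAt_innL_self (hsymm : ∀ x y : H, innL x y = innL y x)
    (hB : ∀ x y : H, |innL x y| ≤ ‖x‖ * ‖y‖) {z : ℝ → H} {z' : H} {t : ℝ}
    (hz : HasDerivAt z z' t) :
    HasDerivAt (fun s => innL (z s) (z s)) (2 * innL z' (z t)) t := by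
  have h := (innL.mkContinuous₂ 1 (by simpa using hB)).hasDerivAt_of_bilinear
    (fun _ => hz) (fun _ => hz)
  simp only [LinearMap.mkContinuous₂_apply] at h
  rw [hsymm (z t) z', ← two_mul] at h
  exact h

lemma continuousOn_innL (hB : ∀ x y : H, |innL x y| ≤ ‖x‖ * ‖y‖) {x y : ℝ → H} {S : Set ℝ}
    (hx : ContinuousOn x S) (hy : ContinuousOn y S) :
    ContinuousOn (fun s => innL (x s) (y s)) S := by
  have hc : Continuous fun p : H × H =>
      (innL.mkContinuous₂ 1 (by simpa using hB) : H →L[ℝ] H →L[ℝ] ℝ) p.1 p.2 := by fun_prop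
  exact hc.comp_continuousOn (hx.prodMk hy)

end StarNorm

/-- Young's inequality for the energy identity: `n, m` are the norms of the discrete error
components, `a, s, o` those of the approximation errors, and `y = ⟨z', z⟩_L`, `l = ‖z‖_L²`. -/
lemma energy_scalar {α Cd Ctr Ck Cb n m a s o y l : ℝ} (hα : 0 < α)
    (h : y + α * (n ^ 2 + m ^ 2) ≤
      l + (s + Cd * a + Ctr * o) * n + (Ck * a + Cb * o) * m) :
    2 * y - 2 * l ≤
      (3 * (1 + Cd ^ 2 + Ctr ^ 2) + 2 * (Ck ^ 2 + Cb ^ 2)) / α * (a ^ 2 + s ^ 2 + o ^ 2)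
        - α * (n ^ 2 + m ^ 2) := by
  have young : ∀ p q : ℝ, 2 * (p * q) ≤ p ^ 2 / α + α * q ^ 2 := by
    intro p q
    have h0 : 0 ≤ (p - α * q) ^ 2 / α := by positivity
    have h1 : (p - α * q) ^ 2 / α = p ^ 2 / α + α * q ^ 2 - 2 * (p * q) := by
      field_simp
      ring
    linarith
  have hS : (s + Cd * a + Ctr * o) ^ 2 ≤
      3 * (1 + Cd ^ 2 + Ctr ^ 2) * (a ^ 2 + s ^ 2 + o ^ 2) := by
    nlinarith [sq_nonneg (s - Cd * a), sq_nonneg (s - Ctr * o), sq_nonneg (Cd * a - Ctr * o),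
      sq_nonneg (Cd * s), sq_nonneg (Cd * o), sq_nonneg (Ctr * s), sq_nonneg (Ctr * a),
      sq_nonneg a, sq_nonneg o]
  have hQ : (Ck * a + Cb * o) ^ 2 ≤ 2 * (Ck ^ 2 + Cb ^ 2) * (a ^ 2 + s ^ 2 + o ^ 2) := by
    nlinarith [sq_nonneg (Ck * a - Cb * o), sq_nonneg (Ck * o), sq_nonneg (Ck * s),
      sq_nonneg (Cb * a), sq_nonneg (Cb * s)]
  have h1 := young (s + Cd * a + Ctr * o) n
  have h2 := young (Ck * a + Cb * o) m
  have h3 := div_le_div_of_nonneg_right (add_le_add hS hQ) hα.le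
  rw [add_div] at h3
  have h4 : (3 * (1 + Cd ^ 2 + Ctr ^ 2) * (a ^ 2 + s ^ 2 + o ^ 2)
        + 2 * (Ck ^ 2 + Cb ^ 2) * (a ^ 2 + s ^ 2 + o ^ 2)) / α =
      (3 * (1 + Cd ^ 2 + Ctr ^ 2) + 2 * (Ck ^ 2 + Cb ^ 2)) / α * (a ^ 2 + s ^ 2 + o ^ 2) := by
    ring
  linarith

/-- Triangle inequality for the error norms `x, r, e`, in terms of the approximation errors
`a, s, o` and the discrete errors `n, q, m`, with `q = |z'|_*` eliminated. -/
lemma error_scalar {CP Cd Ctr n m a s o q x r e : ℝ}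
    (hq0 : 0 ≤ q) (hx0 : 0 ≤ x) (hr0 : 0 ≤ r) (he0 : 0 ≤ e)
    (hq : q ≤ CP * (Cd * n + Ctr * m + (s + Cd * a + Ctr * o)))
    (hx : x ≤ a + n) (hr : r ≤ s + q) (he : e ≤ o + m) :
    x ^ 2 + r ^ 2 + e ^ 2 ≤
      (2 + 18 * CP ^ 2 * (1 + Cd ^ 2 + Ctr ^ 2)) * (a ^ 2 + s ^ 2 + o ^ 2)
        + (2 + 6 * CP ^ 2 * (Cd ^ 2 + Ctr ^ 2)) * (n ^ 2 + m ^ 2) := by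
  have two : ∀ p i j : ℝ, 0 ≤ p → p ≤ i + j → p ^ 2 ≤ 2 * i ^ 2 + 2 * j ^ 2 := by
    intro p i j h0 h
    have := pow_le_pow_left₀ h0 h 2
    nlinarith [sq_nonneg (i - j)]
  have hS : (s + Cd * a + Ctr * o) ^ 2 ≤
      3 * (1 + Cd ^ 2 + Ctr ^ 2) * (a ^ 2 + s ^ 2 + o ^ 2) := by
    nlinarith [sq_nonneg (s - Cd * a), sq_nonneg (s - Ctr * o), sq_nonneg (Cd * a - Ctr * o),
      sq_nonneg (Cd * s), sq_nonneg (Cd * o), sq_nonneg (Ctr * s), sq_nonneg (Ctr * a),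
      sq_nonneg a, sq_nonneg o]
  have hA : (Cd * n + Ctr * m + (s + Cd * a + Ctr * o)) ^ 2 ≤
      3 * ((Cd ^ 2 + Ctr ^ 2) * (n ^ 2 + m ^ 2)) + 3 * (s + Cd * a + Ctr * o) ^ 2 := by
    generalize s + Cd * a + Ctr * o = S
    nlinarith [sq_nonneg (Cd * n - Ctr * m), sq_nonneg (Cd * n - S), sq_nonneg (Ctr * m - S),
      sq_nonneg (Cd * m), sq_nonneg (Ctr * n)]
  have hq2 := pow_le_pow_left₀ hq0 hq 2
  rw [mul_pow] at hq2
  have h1 := mul_le_mul_of_nonneg_left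
    (hA.trans (add_le_add_right (mul_le_mul_of_nonneg_left hS (by norm_num : (0 : ℝ) ≤ 3)) _))
    (sq_nonneg CP)
  have hx2 := two x a n hx0 hx
  have hr2 := two r s q hr0 hr
  have he2 := two e o m he0 he
  linarith

theorem semidiscrete_quasi_best_approximation
    {H B : Type*}
    [NormedAddCommGroup H] [InnerProductSpace ℝ H] [CompleteSpace H]
    [NormedAddCommGroup B] [InnerProductSpace ℝ B] [CompleteSpace B]
    -- the further inner product ⟨·,·⟩_L on H with ‖v‖_L ≤ ‖v‖_H
    (innL : H →ₗ[ℝ] H →ₗ[ℝ] ℝ)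
    (hsymm : ∀ x y : H, innL x y = innL y x)
    (hpos : ∀ x : H, 0 ≤ innL x x)
    (hdef : ∀ x : H, innL x x = 0 → x = 0)
    (hle : ∀ v : H, innL v v ≤ ‖v‖ ^ 2)
    -- the bilinear forms
    (d : H →ₗ[ℝ] H →ₗ[ℝ] ℝ) (c : B →ₗ[ℝ] H →ₗ[ℝ] ℝ)
    (k : H →ₗ[ℝ] B →ₗ[ℝ] ℝ) (b : B →ₗ[ℝ] B →ₗ[ℝ] ℝ)
    -- the constants
    (Cd Ctr Ck Cb CV α CP : ℝ)
    (hCd : 0 < Cd) (hCtr : 0 < Ctr) (hCk : 0 < Ck)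
    (hCb : 0 < Cb) (hCV : 0 < CV) (hα : 0 < α) (hCP : 0 < CP)
    -- boundedness
    (hd : ∀ u v : H, |d u v| ≤ Cd * ‖u‖ * ‖v‖)
    (hc : ∀ (ψ : B) (v : H), |c ψ v| ≤ Ctr * ‖ψ‖ * ‖v‖)
    (hk : ∀ (v : H) (ψ : B), |k v ψ| ≤ Ck * ‖v‖ * ‖ψ‖)
    (hb : ∀ φ ψ : B, |b φ ψ| ≤ Cb * ‖φ‖ * ‖ψ‖)
    -- ellipticity of b
    (hbell : ∀ ψ : B, CV * ‖ψ‖ ^ 2 ≤ b ψ ψ)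
    -- Gårding inequality for the coupled form
    (hgard : ∀ (v : H) (ψ : B),
      α * (‖v‖ ^ 2 + ‖ψ‖ ^ 2) ≤ d v v - c ψ v + k v ψ + b ψ ψ + innL v v) :
    ∀ T > (0 : ℝ), ∃ C > 0,
      ∀ (Hh : Submodule ℝ H) (Bh : Submodule ℝ B)
        -- an H-stable L-orthogonal projection P onto Hh
        (P : H →ₗ[ℝ] H),
        (∀ v : H, P v ∈ Hh) →
        (∀ v : H, ∀ s ∈ Hh, innL (v - P v) s = 0) →
        (∀ v : H, ‖P v‖ ≤ CP * ‖v‖) →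
      ∀ (F : ℝ → H →L[ℝ] ℝ) (G : ℝ → B →L[ℝ] ℝ),
        ContinuousOn F (Set.Icc 0 T) → ContinuousOn G (Set.Icc 0 T) →
      -- the continuous solution (u, φ)
      ∀ (u u' : ℝ → H) (φ : ℝ → B),
        u 0 = 0 →
        (∀ t ∈ Set.Icc (0 : ℝ) T, HasDerivAt u (u' t) t) →
        ContinuousOn u' (Set.Icc 0 T) →
        ContinuousOn φ (Set.Icc 0 T) →
        (∀ t ∈ Set.Icc (0 : ℝ) T,
          (∀ v : H, innL (u' t) v + d (u t) v - c (φ t) v = F t v) ∧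
          (∀ ψ : B, k (u t) ψ + b (φ t) ψ = G t ψ)) →
      -- the semi-discrete Galerkin solution (u_h, φ_h)
      ∀ (uh uh' : ℝ → H) (φh : ℝ → B),
        uh 0 = 0 →
        (∀ t ∈ Set.Icc (0 : ℝ) T, uh t ∈ Hh) →
        (∀ t ∈ Set.Icc (0 : ℝ) T, HasDerivAt uh (uh' t) t) →
        ContinuousOn uh' (Set.Icc 0 T) →
        (∀ t ∈ Set.Icc (0 : ℝ) T, φh t ∈ Bh) →
        ContinuousOn φh (Set.Icc 0 T) →
        (∀ t ∈ Set.Icc (0 : ℝ) T,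
          (∀ v ∈ Hh, innL (uh' t) v + d (uh t) v - c (φh t) v = F t v) ∧
          (∀ ψ ∈ Bh, k (uh t) ψ + b (φh t) ψ = G t ψ)) →
      -- quasi-best-approximation against any discrete competitor (ũ, φ̃)
      ∀ (tu tu' : ℝ → H) (tφ : ℝ → B),
        tu 0 = 0 →
        (∀ t ∈ Set.Icc (0 : ℝ) T, tu t ∈ Hh) →
        (∀ t ∈ Set.Icc (0 : ℝ) T, HasDerivAt tu (tu' t) t) →
        ContinuousOn tu' (Set.Icc 0 T) →
        (∀ t ∈ Set.Icc (0 : ℝ) T, tφ t ∈ Bh) →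
        ContinuousOn tφ (Set.Icc 0 T) →
        (∫ t in (0 : ℝ)..T,
            (‖u t - uh t‖ ^ 2 + (starNorm innL (u' t - uh' t)) ^ 2
              + ‖φ t - φh t‖ ^ 2))
          ≤ C * ∫ t in (0 : ℝ)..T,
              (‖u t - tu t‖ ^ 2 + (starNorm innL (u' t - tu' t)) ^ 2
                + ‖φ t - tφ t‖ ^ 2) := by
  intro T hT
  have hB := abs_innL_le hsymm hpos hle
  set C₁ : ℝ := (3 * (1 + Cd ^ 2 + Ctr ^ 2) + 2 * (Ck ^ 2 + Cb ^ 2)) / α with hC₁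
  set K₁ : ℝ := 2 + 18 * CP ^ 2 * (1 + Cd ^ 2 + Ctr ^ 2) with hK₁
  set K₂ : ℝ := 2 + 6 * CP ^ 2 * (Cd ^ 2 + Ctr ^ 2) with hK₂
  -- `M` turns the weighted coercivity `α exp (-2T) (‖z‖² + ‖ζ‖²)` into `K₂ (‖z‖² + ‖ζ‖²)`.
  set M : ℝ := K₂ / (α * Real.exp (-2 * T)) with hM
  have hC₁0 : 0 < C₁ := by positivity
  have hK₁0 : 0 < K₁ := by positivity
  have hK₂0 : 0 < K₂ := by positivity
  have hM0 : 0 < M := by positivity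
  refine ⟨K₁ + M * C₁, by positivity, ?_⟩
  intro Hh Bh P hPm hPo hPb F G _ _ u u' φ hu0 hu hu'c hφc hsol uh uh' φh huh0 huhm huh huh'c
    hφhm hφhc hsolh tu tu' tφ htu0 htum htu htu'c htφm htφc
  have hzm : ∀ t ∈ Set.Icc (0 : ℝ) T, uh t - tu t ∈ Hh := fun t ht =>
    Hh.sub_mem (huhm t ht) (htum t ht)
  have hz : ∀ t ∈ Set.Icc (0 : ℝ) T, HasDerivAt (fun s => uh s - tu s) (uh' t - tu' t) t :=
    fun t ht => (huh t ht).sub (htu t ht)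
  have hz'm := deriv_mem_of_projection hdef hPm hPo hPb hT hzm hz
  -- The derivative of `g(t) = exp (-2t) ‖z(t)‖_L²`.
  let g' : ℝ → ℝ := fun t => Real.exp (-2 * t) *
    (2 * innL (uh' t - tu' t) (uh t - tu t) - 2 * innL (uh t - tu t) (uh t - tu t))
  have hg : ∀ t ∈ Set.Icc (0 : ℝ) T, HasDerivAt
      (fun t => Real.exp (-2 * t) * innL (uh t - tu t) (uh t - tu t)) (g' t) t := by
    intro t ht
    have h1 : HasDerivAt (fun t : ℝ => Real.exp (-2 * t)) (Real.exp (-2 * t) * (-2)) t := by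
      simpa using ((hasDerivAt_id t).const_mul (-2 : ℝ)).exp
    refine (h1.mul (hasDerivAt_innL_self hsymm hB (hz t ht))).congr_deriv ?_
    simp only [g']
    ring
  have cu : ContinuousOn u (Set.Icc 0 T) := fun t ht => (hu t ht).continuousAt.continuousWithinAt
  have cuh : ContinuousOn uh (Set.Icc 0 T) :=
    fun t ht => (huh t ht).continuousAt.continuousWithinAt
  have ctu : ContinuousOn tu (Set.Icc 0 T) :=
    fun t ht => (htu t ht).continuousAt.continuousWithinAt
  have hsc := continuous_starNorm hB
  have hIcc : Set.uIcc 0 T = Set.Icc 0 T := Set.uIcc_of_le hT.le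
  have ig' : IntervalIntegrable g' MeasureTheory.volume 0 T := by
    apply ContinuousOn.intervalIntegrable
    rw [hIcc]
    have c1 := continuousOn_innL hB (huh'c.sub htu'c) (cuh.sub ctu)
    have c2 := continuousOn_innL hB (cuh.sub ctu) (cuh.sub ctu)
    exact (Continuous.continuousOn (by fun_prop)).mul
      ((continuousOn_const.mul c1).sub (continuousOn_const.mul c2))
  have hg'int : 0 ≤ ∫ t in (0 : ℝ)..T, g' t := by
    rw [intervalIntegral.integral_eq_sub_of_hasDerivAt (by rwa [hIcc]) ig']
    simp only [huh0, htu0, sub_zero, map_zero, mul_zero]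
    exact mul_nonneg (Real.exp_pos _).le (hpos _)
  have iE : IntervalIntegrable (fun t => ‖u t - uh t‖ ^ 2 + (starNorm innL (u' t - uh' t)) ^ 2
      + ‖φ t - φh t‖ ^ 2) MeasureTheory.volume 0 T := by
    apply ContinuousOn.intervalIntegrable
    rw [hIcc]
    exact (((cu.sub cuh).norm.pow 2).add ((hsc.comp_continuousOn (hu'c.sub huh'c)).pow 2)).add
      ((hφc.sub hφhc).norm.pow 2)
  have iR : IntervalIntegrable (fun t => ‖u t - tu t‖ ^ 2 + (starNorm innL (u' t - tu' t)) ^ 2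
      + ‖φ t - tφ t‖ ^ 2) MeasureTheory.volume 0 T := by
    apply ContinuousOn.intervalIntegrable
    rw [hIcc]
    exact (((cu.sub ctu).norm.pow 2).add ((hsc.comp_continuousOn (hu'c.sub htu'c)).pow 2)).add
      ((hφc.sub htφc).norm.pow 2)
  have key : ∀ t ∈ Set.Icc (0 : ℝ) T,
      ‖u t - uh t‖ ^ 2 + (starNorm innL (u' t - uh' t)) ^ 2 + ‖φ t - φh t‖ ^ 2 ≤
        (K₁ + M * C₁) * (‖u t - tu t‖ ^ 2 + (starNorm innL (u' t - tu' t)) ^ 2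
          + ‖φ t - tφ t‖ ^ 2) - M * g' t := by
    intro t ht
    -- Galerkin orthogonality, written for the discrete error components.
    have gal1 : ∀ v ∈ Hh, innL (uh' t - tu' t) v =
        - d (uh t - tu t) v + c (φh t - tφ t) v
          + (innL (u' t - tu' t) v + d (u t - tu t) v - c (φ t - tφ t) v) := by
      intro v hv
      have h1 := (hsol t ht).1 v
      have h2 := (hsolh t ht).1 v hv
      simp only [map_sub, LinearMap.sub_apply]
      linarith
    have gal2 : ∀ ψ ∈ Bh, k (uh t - tu t) ψ + b (φh t - tφ t) ψ =
        k (u t - tu t) ψ + b (φ t - tφ t) ψ := by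
      intro ψ hψ
      have h1 := (hsol t ht).2 ψ
      have h2 := (hsolh t ht).2 ψ hψ
      simp only [map_sub, LinearMap.sub_apply]
      linarith
    have hzt := hzm t ht
    have hz't := hz'm t ht
    have hζt : φh t - tφ t ∈ Bh := Bh.sub_mem (hφhm t ht) (htφm t ht)
    have tri1 : ‖u t - uh t‖ ≤ ‖u t - tu t‖ + ‖uh t - tu t‖ := by
      rw [← sub_sub_sub_cancel_right (u t) (uh t) (tu t)]
      exact norm_sub_le _ _
    have tri2 : starNorm innL (u' t - uh' t) ≤
        starNorm innL (u' t - tu' t) + starNorm innL (uh' t - tu' t) := by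
      rw [← sub_sub_sub_cancel_right (u' t) (uh' t) (tu' t)]
      exact starNorm_sub_le hB _ _
    have tri3 : ‖φ t - φh t‖ ≤ ‖φ t - tφ t‖ + ‖φh t - tφ t‖ := by
      rw [← sub_sub_sub_cancel_right (φ t) (φh t) (tφ t)]
      exact norm_sub_le _ _
    simp only [g']
    generalize uh t - tu t = z at *
    generalize uh' t - tu' t = z' at *
    generalize φh t - tφ t = ζ at *
    generalize u t - tu t = w at *
    generalize u' t - tu' t = w' at *
    generalize φ t - tφ t = ω at *
    have hen : innL z' z + α * (‖z‖ ^ 2 + ‖ζ‖ ^ 2) ≤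
        innL z z + (starNorm innL w' + Cd * ‖w‖ + Ctr * ‖ω‖) * ‖z‖
          + (Ck * ‖w‖ + Cb * ‖ω‖) * ‖ζ‖ := by
      have h1 := gal1 z hzt
      have h2 := gal2 ζ hζt
      have h3 := hgard z ζ
      have h4 := innL_le_starNorm hB w' z
      have h5 := (abs_le.1 (hd w z)).2
      have h6 := (abs_le.1 (hc ω z)).1
      have h7 := (abs_le.1 (hk w ζ)).2
      have h8 := (abs_le.1 (hb ω ζ)).2
      linarith
    have hq : starNorm innL z' ≤
        CP * (Cd * ‖z‖ + Ctr * ‖ζ‖ + (starNorm innL w' + Cd * ‖w‖ + Ctr * ‖ω‖)) := by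
      have hs := starNorm_nonneg (innL := innL) w'
      apply starNorm_le (by positivity)
      intro v
      have hv : innL z' v = innL z' (P v) := by
        have := hPo v z' hz't
        rw [hsymm, map_sub] at this
        linarith
      have h1 := gal1 (P v) (hPm v)
      have h2 := (abs_le.1 (hd z (P v))).1
      have h3 := (abs_le.1 (hc ζ (P v))).2
      have h4 := innL_le_starNorm hB w' (P v)
      have h5 := (abs_le.1 (hd w (P v))).2
      have h6 := (abs_le.1 (hc ω (P v))).1
      have h7 := mul_le_mul_of_nonneg_left (hPb v) (by positivity :
        0 ≤ Cd * ‖z‖ + Ctr * ‖ζ‖ + (starNorm innL w' + Cd * ‖w‖ + Ctr * ‖ω‖))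
      rw [hv]
      linarith
    have e1 := energy_scalar hα hen
    have e2 := error_scalar (starNorm_nonneg z') (norm_nonneg _) (starNorm_nonneg _)
      (norm_nonneg _) hq tri1 tri2 tri3
    rw [← hC₁] at e1
    rw [← hK₁, ← hK₂] at e2
    have hR : 0 ≤ ‖w‖ ^ 2 + starNorm innL w' ^ 2 + ‖ω‖ ^ 2 := by positivity
    have hN : 0 ≤ ‖z‖ ^ 2 + ‖ζ‖ ^ 2 := by positivity
    generalize ‖w‖ ^ 2 + starNorm innL w' ^ 2 + ‖ω‖ ^ 2 = R at *
    generalize ‖z‖ ^ 2 + ‖ζ‖ ^ 2 = N at *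
    have x1 : Real.exp (-2 * t) ≤ 1 := Real.exp_le_one_iff.2 (by linarith [ht.1])
    have x2 : Real.exp (-2 * T) ≤ Real.exp (-2 * t) := Real.exp_le_exp.2 (by linarith [ht.2])
    have f1 : Real.exp (-2 * t) * (2 * innL z' z - 2 * innL z z) ≤
        C₁ * R - α * Real.exp (-2 * T) * N := by
      have y1 := mul_le_mul_of_nonneg_left e1 (Real.exp_pos (-2 * t)).le
      have y2 := mul_le_mul_of_nonneg_right x1 (mul_nonneg hC₁0.le hR)
      have y3 := mul_le_mul_of_nonneg_right x2 (mul_nonneg hα.le hN)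
      linarith
    have f2 := mul_le_mul_of_nonneg_left f1 hM0.le
    have f3 : M * (α * Real.exp (-2 * T)) = K₂ := by
      rw [hM]
      exact div_mul_cancel₀ _ (by positivity)
    have f4 : M * (C₁ * R - α * Real.exp (-2 * T) * N) = M * C₁ * R - K₂ * N := by
      rw [← f3]
      ring
    linarith
  have hint := intervalIntegral.integral_mono_on hT.le iE
    ((iR.const_mul (K₁ + M * C₁)).sub (ig'.const_mul M)) key
  rw [intervalIntegral.integral_sub (iR.const_mul _) (ig'.const_mul _),
    intervalIntegral.integral_const_mul, intervalIntegral.integral_const_mul] at hint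
  linarith [mul_nonneg hM0.le hg'int]
end
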